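/- Assume that for every Q ≻ 0 for which V_Q is a control Lyapunov function of the bilinear system, the SDP feasibility problem {Z PSD, Z ≠ 0, trace(sym(QA)Z) ≥ 0, trace(sym(QB_i)Z) = 0 for all i} is infeasible. Then a quadratic CLF V_Q exists for the bilinear system if and only if there exist constants c_1,...,c_m making A − sum_i c_i B_i Hurwitz. -/

import Mathlib

open Matrix

/-- A real matrix is Hurwitz if all of its (complex) eigenvalues have negative real part. -/
def IsHurwitz {N : ℕ} (M : Matrix (Fin N) (Fin N) ℝ) : Prop :=
  ∀ μ ∈ spectrum ℂ (M.map (Complex.ofReal)), μ.re < 0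

open Filter in
open scoped Matrix.Norms.L2Operator in
lemma aux_pow_contract {N : ℕ} (C : Matrix (Fin N) (Fin N) ℂ)
    (h : ∀ κ ∈ spectrum ℂ C, ‖κ‖ < 1) : ∃ k : ℕ, 1 ≤ k ∧ ‖C ^ k‖ < 1 := by
  rcases subsingleton_or_nontrivial (Matrix (Fin N) (Fin N) ℂ) with hs | hs
  · refine ⟨1, le_rfl, ?_⟩
    rw [Subsingleton.elim (C ^ 1) 0]; simp
  · have h1 : spectralRadius ℂ C < ((1 : NNReal) : ENNReal) :=
      spectrum.spectralRadius_lt_of_forall_lt C (fun z hz => by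
        have := h z hz
        exact_mod_cast this)
    have h2 := (spectrum.pow_norm_pow_one_div_tendsto_nhds_spectralRadius C).eventually
      (gt_mem_nhds h1)
    obtain ⟨k, hk, hk1⟩ := (h2.and (eventually_ge_atTop 1)).exists
    refine ⟨k, hk1, ?_⟩
    by_contra hcon
    push Not at hcon
    have : (1 : ℝ) ≤ ‖C ^ k‖ ^ (1 / (k : ℝ)) := Real.one_le_rpow hcon (by positivity)
    have h3 := ENNReal.ofReal_le_ofReal this
    simp only [ENNReal.ofReal_one] at h3
    exact absurd hk (by simpa using h3)

lemma aux_cayley_spec {N : ℕ} (M C : Matrix (Fin N) (Fin N) ℂ)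
    (hM : ∀ μ ∈ spectrum ℂ M, μ.re < 0) (hu : IsUnit (M - 1)) (hC : C * (M - 1) = M + 1) :
    ∀ κ ∈ spectrum ℂ C, ‖κ‖ < 1 := by
  intro κ hκ
  rw [spectrum.mem_iff, ← hu.mul_right_iff, sub_mul, hC, Algebra.algebraMap_eq_smul_one] at hκ
  by_cases h1 : κ = 1
  · exfalso
    apply hκ
    have : (κ • (1 : Matrix (Fin N) (Fin N) ℂ)) * (M - 1) - (M + 1)
        = algebraMap ℂ (Matrix (Fin N) (Fin N) ℂ) (-2) := by
      rw [h1, Algebra.algebraMap_eq_smul_one]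
      simp only [one_smul, one_mul]
      module
    rw [this]
    exact (IsUnit.mk0 (-2 : ℂ) (by norm_num)).map _
  · have h1' : κ - 1 ≠ 0 := sub_ne_zero.mpr h1
    have hμ : (κ + 1) / (κ - 1) ∈ spectrum ℂ M := by
      rw [spectrum.mem_iff]
      intro hun
      apply hκ
      have : (κ • (1 : Matrix (Fin N) (Fin N) ℂ)) * (M - 1) - (M + 1)
        = algebraMap ℂ (Matrix (Fin N) (Fin N) ℂ) (-(κ - 1)) *
          (algebraMap ℂ (Matrix (Fin N) (Fin N) ℂ) ((κ + 1) / (κ - 1)) - M) := by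
        rw [Algebra.algebraMap_eq_smul_one, Algebra.algebraMap_eq_smul_one]
        simp only [smul_mul_assoc, one_mul, smul_sub, smul_smul]
        have : -(κ - 1) * ((κ + 1) / (κ - 1)) = -(κ + 1) := by field_simp
        rw [this]
        module
      rw [this]
      exact ((IsUnit.mk0 (-(κ - 1)) (neg_ne_zero.mpr h1')).map _).mul hun
    have hre := hM _ hμ
    have e : (κ + 1) / (κ - 1) = ((κ + 1) * (starRingEnd ℂ) (κ - 1)) / ((Complex.normSq (κ - 1) : ℝ) : ℂ) := by
      rw [Complex.normSq_eq_conj_mul_self]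
      have : (starRingEnd ℂ) (κ - 1) ≠ 0 := (map_ne_zero _).mpr h1'
      field_simp
    rw [e, Complex.div_ofReal_re] at hre
    have hp : 0 < Complex.normSq (κ - 1) := Complex.normSq_pos.mpr h1'
    have h4 := (div_neg_iff.mp hre).resolve_left (by rintro ⟨_, h⟩; linarith)
    have h5 := h4.1
    simp at h5
    have h6 : ‖κ‖ ^ 2 < 1 := by
      rw [← Complex.normSq_eq_norm_sq, Complex.normSq_apply]
      nlinarith
    nlinarith [norm_nonneg κ]

open scoped Matrix.Norms.L2Operator in
lemma aux_real_contract {N : ℕ} (C : Matrix (Fin N) (Fin N) ℝ)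
    (h : ‖C.map Complex.ofReal‖ < 1) (z : Fin N → ℝ) (hz : z ≠ 0) :
    (C *ᵥ z) ⬝ᵥ (C *ᵥ z) < z ⬝ᵥ z := by
  have h1 := Matrix.l2_opNorm_mulVec (C.map Complex.ofReal)
    (WithLp.toLp 2 (fun i => (z i : ℂ)))
  have hzp : 0 < z ⬝ᵥ z := by
    have := Matrix.dotProduct_star_self_pos_iff.mpr hz
    simpa using this
  have hn : ‖(WithLp.toLp 2 (fun i => (z i : ℂ)) : EuclideanSpace ℂ (Fin N))‖ ^ 2 = z ⬝ᵥ z := by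
    rw [EuclideanSpace.norm_sq_eq]
    simp [dotProduct, sq]
  have hn2 : ‖(EuclideanSpace.equiv (Fin N) ℂ).symm ((C.map Complex.ofReal) *ᵥ
      (WithLp.toLp 2 (fun i => (z i : ℂ)) : EuclideanSpace ℂ (Fin N)).ofLp)‖ ^ 2
      = (C *ᵥ z) ⬝ᵥ (C *ᵥ z) := by
    rw [EuclideanSpace.norm_sq_eq]
    simp only [dotProduct, ← sq]
    refine Finset.sum_congr rfl fun i _ => ?_
    have := RingHom.map_mulVec Complex.ofRealHom C z i
    have e : ((EuclideanSpace.equiv (Fin N) ℂ).symm ((C.map Complex.ofReal) *ᵥ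
      (WithLp.toLp 2 (fun i => (z i : ℂ)) : EuclideanSpace ℂ (Fin N)).ofLp)).ofLp i
      = (((C *ᵥ z) i : ℝ) : ℂ) := this.symm
    rw [e]; simp
  rw [← hn, ← hn2]
  have hpos : 0 < ‖(WithLp.toLp 2 (fun i => (z i : ℂ)) : EuclideanSpace ℂ (Fin N))‖ := by
    rw [← hn] at hzp
    exact lt_of_le_of_ne (norm_nonneg _) (fun h0 => by rw [← h0] at hzp; simp at hzp)
  refine pow_lt_pow_left₀ (lt_of_le_of_lt h1 ?_) (norm_nonneg _) two_ne_zero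
  nlinarith

lemma aux_lyap {N : ℕ} (M : Matrix (Fin N) (Fin N) ℝ) (hM : IsHurwitz M) :
    ∃ Q : Matrix (Fin N) (Fin N) ℝ, Q.PosDef ∧
      ∀ z : Fin N → ℝ, z ≠ 0 → z ⬝ᵥ ((Q * M) *ᵥ z) < 0 := by
  have hmap : ∀ X : Matrix (Fin N) (Fin N) ℝ,
      X.map Complex.ofReal = (Complex.ofRealHom.mapMatrix X) := fun X => rfl
  have huc : IsUnit (M.map Complex.ofReal - 1) := by
    by_contra hcon
    have : (1 : ℂ) ∈ spectrum ℂ (M.map Complex.ofReal) := by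
      rw [spectrum.mem_iff, map_one, ← IsUnit.neg_iff, neg_sub]; exact hcon
    have := hM _ this
    simp at this
    linarith
  have hur : IsUnit (M - 1) := by
    rw [Matrix.isUnit_iff_isUnit_det] at huc ⊢
    have e : (M.map Complex.ofReal - 1) = Complex.ofRealHom.mapMatrix (M - 1) := by
      rw [map_sub, map_one, hmap]
    rw [e, ← RingHom.map_det] at huc
    rw [isUnit_iff_ne_zero] at huc ⊢
    intro h; apply huc; rw [h]; simp
  obtain ⟨u, hu⟩ := hur
  set C : Matrix (Fin N) (Fin N) ℝ := (M + 1) * (↑u⁻¹ : Matrix (Fin N) (Fin N) ℝ) with hCdef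
  have hC : C * (M - 1) = M + 1 := by
    rw [hCdef, ← hu, mul_assoc, Units.inv_mul, mul_one]
  have hCc : C.map Complex.ofReal * (M.map Complex.ofReal - 1) = M.map Complex.ofReal + 1 := by
    have := congrArg Complex.ofRealHom.mapMatrix hC
    rw [map_mul, map_sub, map_add, map_one, ← hmap, ← hmap] at this
    exact this
  obtain ⟨k, hk1, hk⟩ := aux_pow_contract _ (aux_cayley_spec _ _ hM huc hCc)
  have hk' : ∀ z : Fin N → ℝ, z ≠ 0 → (C ^ k *ᵥ z) ⬝ᵥ (C ^ k *ᵥ z) < z ⬝ᵥ z := by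
    apply aux_real_contract
    rw [hmap, map_pow, ← hmap]
    exact hk
  set P : Matrix (Fin N) (Fin N) ℝ := ∑ j ∈ Finset.range k, (C ^ j)ᵀ * (C ^ j) with hP
  have hPT : Pᵀ = P := by
    rw [hP, Matrix.transpose_sum]
    simp [Matrix.transpose_mul]
  have hbil : ∀ x y : Fin N → ℝ, x ⬝ᵥ (P *ᵥ y)
      = ∑ j ∈ Finset.range k, (C ^ j *ᵥ x) ⬝ᵥ (C ^ j *ᵥ y) := by
    intro x y
    rw [hP, Matrix.sum_mulVec, dotProduct_sum]
    refine Finset.sum_congr rfl fun j _ => ?_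
    rw [← Matrix.mulVec_mulVec, Matrix.dotProduct_mulVec, Matrix.vecMul_transpose]
  have hsymm : ∀ x y : Fin N → ℝ, x ⬝ᵥ (P *ᵥ y) = y ⬝ᵥ (P *ᵥ x) := by
    intro x y
    rw [hbil, hbil]
    exact Finset.sum_congr rfl fun j _ => dotProduct_comm _ _
  have htel : ∀ z : Fin N → ℝ, (C *ᵥ z) ⬝ᵥ (P *ᵥ (C *ᵥ z)) - z ⬝ᵥ (P *ᵥ z)
      = (C ^ k *ᵥ z) ⬝ᵥ (C ^ k *ᵥ z) - z ⬝ᵥ z := by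
    intro z
    rw [hbil, hbil, ← Finset.sum_sub_distrib]
    have := Finset.sum_range_sub (fun j => (C ^ j *ᵥ z) ⬝ᵥ (C ^ j *ᵥ z)) k
    simp only [pow_zero, Matrix.one_mulVec] at this
    rw [← this]
    refine Finset.sum_congr rfl fun j _ => ?_
    rw [Matrix.mulVec_mulVec, ← pow_succ]
  refine ⟨P, Matrix.PosDef.of_dotProduct_mulVec_pos ?_ ?_, ?_⟩
  · rw [Matrix.IsHermitian, Matrix.conjTranspose_eq_transpose_of_trivial, hPT]
  · intro x hx
    rw [star_trivial, hbil]
    have hxp : 0 < x ⬝ᵥ x := by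
      have := Matrix.dotProduct_star_self_pos_iff.mpr hx
      simpa using this
    refine Finset.sum_pos' (fun j _ => ?_) ⟨0, Finset.mem_range.mpr hk1, by simpa using hxp⟩
    have := dotProduct_star_self_nonneg (C ^ j *ᵥ x)
    simpa using this
  · intro w hw
    have hz : (M - 1) *ᵥ w ≠ 0 := by
      intro h0
      apply hw
      have : (↑u⁻¹ : Matrix (Fin N) (Fin N) ℝ) *ᵥ ((M - 1) *ᵥ w) = w := by
        rw [Matrix.mulVec_mulVec, ← hu, Units.inv_mul, Matrix.one_mulVec]
      rw [← this, h0, Matrix.mulVec_zero]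
    have h1 := htel ((M - 1) *ᵥ w)
    have h2 := hk' _ hz
    rw [Matrix.mulVec_mulVec _ C, hC, Matrix.add_mulVec, Matrix.sub_mulVec, Matrix.one_mulVec] at h1
    rw [Matrix.sub_mulVec, Matrix.one_mulVec] at h2
    simp only [Matrix.mulVec_add, Matrix.mulVec_sub, add_dotProduct, sub_dotProduct,
      dotProduct_add, dotProduct_sub] at h1 h2
    rw [← Matrix.mulVec_mulVec]
    have h3 := hsymm w (M *ᵥ w)
    linarith

lemma aux_hurwitz {N : ℕ} (M Q : Matrix (Fin N) (Fin N) ℝ) (hQ : Q.PosDef)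
    (h : ∀ z : Fin N → ℝ, z ≠ 0 → z ⬝ᵥ ((Q * M) *ᵥ z) < 0) : IsHurwitz M := by
  intro μ hμ
  rw [spectrum.mem_iff, Matrix.isUnit_iff_isUnit_det, isUnit_iff_ne_zero, not_not,
    ← Matrix.exists_mulVec_eq_zero_iff] at hμ
  obtain ⟨v, hv, hv0⟩ := hμ
  rw [Matrix.sub_mulVec, Algebra.algebraMap_eq_smul_one, Matrix.smul_mulVec, Matrix.one_mulVec,
    sub_eq_zero] at hv0
  set x : Fin N → ℝ := fun i => (v i).re with hx
  set y : Fin N → ℝ := fun i => (v i).im with hy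
  have hMx : M *ᵥ x = μ.re • x - μ.im • y := by
    ext i
    have := congrArg Complex.re (congrFun hv0 i)
    simp [Matrix.mulVec, dotProduct, Complex.mul_re] at this
    simp [Matrix.mulVec, dotProduct, hx, hy]
    linarith
  have hMy : M *ᵥ y = μ.im • x + μ.re • y := by
    ext i
    have := congrArg Complex.im (congrFun hv0 i)
    simp [Matrix.mulVec, dotProduct, Complex.mul_im] at this
    simp [Matrix.mulVec, dotProduct, hx, hy]
    linarith
  obtain ⟨hH, hpos⟩ := Matrix.posDef_iff_dotProduct_mulVec.mp hQ
  have hsymm : x ⬝ᵥ (Q *ᵥ y) = y ⬝ᵥ (Q *ᵥ x) := by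
    have hT : Qᵀ = Q := by
      have := hH.eq
      rwa [Matrix.conjTranspose_eq_transpose_of_trivial] at this
    rw [Matrix.dotProduct_mulVec, ← Matrix.mulVec_transpose, hT, dotProduct_comm]
  have hle : ∀ z : Fin N → ℝ, z ⬝ᵥ ((Q * M) *ᵥ z) ≤ 0 := by
    intro z
    by_cases hz : z = 0
    · simp [hz]
    · exact (h z hz).le
  have hge : ∀ z : Fin N → ℝ, 0 ≤ z ⬝ᵥ (Q *ᵥ z) := by
    intro z
    by_cases hz : z = 0
    · simp [hz]
    · simpa using (hpos hz).le
  have key : x ⬝ᵥ ((Q * M) *ᵥ x) + y ⬝ᵥ ((Q * M) *ᵥ y)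
      = μ.re * (x ⬝ᵥ (Q *ᵥ x) + y ⬝ᵥ (Q *ᵥ y)) := by
    rw [← Matrix.mulVec_mulVec, ← Matrix.mulVec_mulVec, hMx, hMy]
    simp only [Matrix.mulVec_add, Matrix.mulVec_sub, Matrix.mulVec_smul, dotProduct_add,
      dotProduct_sub, dotProduct_smul, smul_eq_mul, hsymm]
    ring
  have hneg : x ⬝ᵥ ((Q * M) *ᵥ x) + y ⬝ᵥ ((Q * M) *ᵥ y) < 0 := by
    by_cases hx0 : x = 0
    · have hy0 : y ≠ 0 := by
        intro hy0
        apply hv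
        ext i
        exact Complex.ext (congrFun hx0 i) (congrFun hy0 i)
      linarith [hle x, h y hy0]
    · linarith [hle y, h x hx0]
  rw [key] at hneg
  by_contra hcon
  push Not at hcon
  have := mul_nonneg hcon (add_nonneg (hge x) (hge y))
  linarith

lemma aux_entry {N : ℕ} (Z : Matrix (Fin N) (Fin N) ℝ) (hZ : Z.PosSemidef) (ht : Z.trace = 1)
    (i j : Fin N) : Z i j ∈ Set.Icc (-1 : ℝ) 1 := by
  obtain ⟨hH, hp⟩ := Matrix.posSemidef_iff_dotProduct_mulVec.mp hZ
  have hs : Z j i = Z i j := by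
    have := hH.apply i j
    simpa using this
  have hd : ∀ i, 0 ≤ Z i i := fun i => hZ.diag_nonneg
  have hd1 : ∀ i, Z i i ≤ 1 := fun i => by
    rw [← ht]
    exact Finset.single_le_sum (f := fun i => Z i i) (fun i _ => hd i) (Finset.mem_univ i)
  have h1 := hp (Pi.single i 1 + Pi.single j 1)
  have h2 := hp (Pi.single i 1 - Pi.single j 1)
  simp [Matrix.mulVec_add, Matrix.mulVec_sub] at h1 h2
  constructor <;> linarith [hd1 i, hd1 j]

lemma aux_trace {N : ℕ} (P : Matrix (Fin N) (Fin N) ℝ) (z : Fin N → ℝ) :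
    Matrix.trace (((1 / 2 : ℝ) • (P + Pᵀ)) * vecMulVec z z) = z ⬝ᵥ (P *ᵥ z) := by
  rw [Matrix.mul_vecMulVec, Matrix.trace_vecMulVec, Matrix.smul_mulVec, Matrix.add_mulVec,
    smul_dotProduct, add_dotProduct, Matrix.mulVec_transpose, ← Matrix.dotProduct_mulVec,
    dotProduct_comm (P *ᵥ z) z, smul_eq_mul]
  ring

def auxK (N : ℕ) : Set (Matrix (Fin N) (Fin N) ℝ) := {Z | Z.PosSemidef ∧ Z.trace = 1}

lemma auxK_convex (N : ℕ) : Convex ℝ (auxK N) := by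
  intro X hX Y hY a b ha hb hab
  refine ⟨(hX.1.smul ha).add (hY.1.smul hb), ?_⟩
  rw [Matrix.trace_add, Matrix.trace_smul, Matrix.trace_smul, hX.2, hY.2]
  simpa using hab

lemma auxK_compact (N : ℕ) : IsCompact (auxK N) := by
  have hc : IsCompact (Set.pi Set.univ (fun _ : Fin N => Set.pi Set.univ
      (fun _ : Fin N => Set.Icc (-1 : ℝ) 1))) :=
    isCompact_univ_pi fun _ => isCompact_univ_pi fun _ => isCompact_Icc
  refine IsCompact.of_isClosed_subset hc ?_ ?_
  · have : auxK N = {Z : Matrix (Fin N) (Fin N) ℝ | Zᵀ = Z} ∩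
        (⋂ x : Fin N → ℝ, {Z : Matrix (Fin N) (Fin N) ℝ | 0 ≤ x ⬝ᵥ (Z *ᵥ x)}) ∩
        {Z : Matrix (Fin N) (Fin N) ℝ | Z.trace = 1} := by
      ext Z
      simp [auxK, Matrix.posSemidef_iff_dotProduct_mulVec, Matrix.IsHermitian,
        Matrix.conjTranspose_eq_transpose_of_trivial]
    have h2 : IsClosed (auxK N) := by
      rw [this]
      refine (IsClosed.inter (isClosed_eq (by fun_prop) (by fun_prop))
        (isClosed_iInter fun x => isClosed_le (by fun_prop) (by fun_prop))).inter
        (isClosed_eq (by fun_prop) (by fun_prop))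
    exact h2
  · intro Z hZ
    exact fun i _ j _ => aux_entry Z hZ.1 hZ.2 i j

lemma aux_farkas {N m : ℕ} (P : Matrix (Fin N) (Fin N) ℝ)
    (R : Fin m → Matrix (Fin N) (Fin N) ℝ)
    (h : ¬∃ Z : Matrix (Fin N) (Fin N) ℝ, Z.PosSemidef ∧ Z ≠ 0 ∧
        0 ≤ Matrix.trace (((1 / 2 : ℝ) • (P + Pᵀ)) * Z) ∧
        ∀ i, Matrix.trace (((1 / 2 : ℝ) • (R i + (R i)ᵀ)) * Z) = 0) :
    ∃ c : Fin m → ℝ, ∀ z : Fin N → ℝ, z ≠ 0 →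
      z ⬝ᵥ (P *ᵥ z) - ∑ i, c i * (z ⬝ᵥ (R i *ᵥ z)) < 0 := by
  set g : Matrix (Fin N) (Fin N) ℝ →ₗ[ℝ] ℝ × (Fin m → ℝ) :=
    { toFun := fun Z => (Matrix.trace (((1 / 2 : ℝ) • (P + Pᵀ)) * Z),
        fun i => Matrix.trace (((1 / 2 : ℝ) • (R i + (R i)ᵀ)) * Z))
      map_add' := by
        intro X Y
        ext <;> simp [mul_add]
      map_smul' := by
        intro a X
        ext <;> simp } with hg
  have hgc : Continuous g := by
    change Continuous (fun Z => (Matrix.trace (((1 / 2 : ℝ) • (P + Pᵀ)) * Z),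
        fun i => Matrix.trace (((1 / 2 : ℝ) • (R i + (R i)ᵀ)) * Z)))
    fun_prop
  have hKc : IsCompact (g '' auxK N) := (auxK_compact N).image hgc
  have hKv : Convex ℝ (g '' auxK N) := (auxK_convex N).linear_image g
  have hTc : IsClosed (Set.Ici (0 : ℝ) ×ˢ ({0} : Set (Fin m → ℝ))) :=
    isClosed_Ici.prod isClosed_singleton
  have hTv : Convex ℝ (Set.Ici (0 : ℝ) ×ˢ ({0} : Set (Fin m → ℝ))) :=
    (convex_Ici 0).prod (convex_singleton 0)
  have hdisj : Disjoint (g '' auxK N) (Set.Ici (0 : ℝ) ×ˢ ({0} : Set (Fin m → ℝ))) := by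
    rw [Set.disjoint_left]
    rintro _ ⟨Z, hZ, rfl⟩ hm
    refine h ⟨Z, hZ.1, ?_, hm.1, fun i => congrFun hm.2 i⟩
    rintro rfl
    have := hZ.2
    simp at this
  obtain ⟨f, s, t, hf1, hst, hf2⟩ := geometric_hahn_banach_compact_closed hKv hKc hTv hTc hdisj
  have ht : t < 0 := by
    have := hf2 (0, 0) (by simp)
    rwa [show ((0 : ℝ), (0 : Fin m → ℝ)) = 0 from rfl, map_zero] at this
  set α : ℝ := f (1, 0) with hα
  set β : Fin m → ℝ := fun i => f (0, Pi.single i 1) with hβ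
  have hf : ∀ a b, f (a, b) = α * a + ∑ i, β i * b i := by
    intro a b
    have e : ((a, b) : ℝ × (Fin m → ℝ)) = a • ((1 : ℝ), (0 : Fin m → ℝ))
        + ∑ i, b i • ((0 : ℝ), (Pi.single i 1 : Fin m → ℝ)) := by
      ext j
      · simp [Prod.fst_sum]
      · simp [Prod.snd_sum, Finset.sum_apply, Pi.single_apply]
    rw [e, map_add, map_smul, map_sum]
    simp only [map_smul, smul_eq_mul, hα, hβ]
    rw [mul_comm]
    congr 1
    exact Finset.sum_congr rfl fun i _ => mul_comm _ _
  have hα0 : 0 ≤ α := by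
    by_contra hcon
    push Not at hcon
    have := hf2 (t / α, 0) (by simp [div_nonneg_of_nonpos ht.le hcon.le])
    rw [hf] at this
    simp [mul_div_cancel₀ _ hcon.ne] at this
  obtain ⟨b0, hb0⟩ := (hKc.image continuous_fst).bddAbove
  set b := max b0 0 with hb
  have hb1 : 0 ≤ b := le_max_right _ _
  set ε := -t / (b + 1) with hε
  have hεp : 0 < ε := div_pos (by linarith) (by linarith)
  have hεb : ε * (b + 1) = -t := div_mul_cancel₀ _ (by linarith)
  have hαε : 0 < α + ε := by linarith
  refine ⟨fun i => -(β i) / (α + ε), fun z hz => ?_⟩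
  have hzp : 0 < z ⬝ᵥ z := by
    have := Matrix.dotProduct_star_self_pos_iff.mpr hz
    simpa using this
  have hmem : (z ⬝ᵥ z)⁻¹ • vecMulVec z z ∈ auxK N := by
    refine ⟨?_, ?_⟩
    · have := Matrix.posSemidef_vecMulVec_self_star z
      rw [star_trivial] at this
      exact this.smul (inv_nonneg.mpr hzp.le)
    · rw [Matrix.trace_smul, Matrix.trace_vecMulVec, smul_eq_mul, inv_mul_cancel₀ hzp.ne']
  have hgz : g ((z ⬝ᵥ z)⁻¹ • vecMulVec z z) = ((z ⬝ᵥ z)⁻¹ * (z ⬝ᵥ (P *ᵥ z)),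
      fun i => (z ⬝ᵥ z)⁻¹ * (z ⬝ᵥ (R i *ᵥ z))) := by
    rw [map_smul]
    have : g (vecMulVec z z) = (z ⬝ᵥ (P *ᵥ z), fun i => z ⬝ᵥ (R i *ᵥ z)) := by
      change (_, _) = _
      simp only [aux_trace]
    rw [this]
    rfl
  have h1 := hf1 _ (Set.mem_image_of_mem g hmem)
  have h2 : (g ((z ⬝ᵥ z)⁻¹ • vecMulVec z z)).1 ≤ b0 :=
    hb0 (Set.mem_image_of_mem _ (Set.mem_image_of_mem g hmem))
  rw [hgz] at h1 h2
  rw [hf] at h1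
  simp only at h1 h2
  have h3 : (z ⬝ᵥ z)⁻¹ * (z ⬝ᵥ (P *ᵥ z)) ≤ b := h2.trans (le_max_left _ _)
  have h4 := mul_le_mul_of_nonneg_left h3 hεp.le
  have h5 : (α + ε) * ((z ⬝ᵥ z)⁻¹ * (z ⬝ᵥ (P *ᵥ z)))
      + ∑ i, β i * ((z ⬝ᵥ z)⁻¹ * (z ⬝ᵥ (R i *ᵥ z))) < 0 := by
    nlinarith
  have h6 : (α + ε) * ((z ⬝ᵥ z)⁻¹ * (z ⬝ᵥ (P *ᵥ z)))
      + ∑ i, β i * ((z ⬝ᵥ z)⁻¹ * (z ⬝ᵥ (R i *ᵥ z)))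
      = ((α + ε) * (z ⬝ᵥ z)⁻¹) * (z ⬝ᵥ (P *ᵥ z) -
        ∑ i, -(β i) / (α + ε) * (z ⬝ᵥ (R i *ᵥ z))) := by
    rw [mul_sub, Finset.mul_sum, sub_eq_add_neg, ← Finset.sum_neg_distrib]
    congr 1
    · ring
    · refine Finset.sum_congr rfl fun i _ => ?_
      field_simp
  rw [h6] at h5
  exact (pos_iff_neg_of_mul_neg h5).mp (mul_pos hαε (inv_pos.mpr hzp))

lemma aux_expand {N m : ℕ} (Q A : Matrix (Fin N) (Fin N) ℝ)
    (B : Fin m → Matrix (Fin N) (Fin N) ℝ) (c : Fin m → ℝ) (z : Fin N → ℝ) :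
    z ⬝ᵥ ((Q * (A - ∑ i, c i • B i)) *ᵥ z)
      = z ⬝ᵥ ((Q * A) *ᵥ z) - ∑ i, c i * (z ⬝ᵥ ((Q * B i) *ᵥ z)) := by
  rw [mul_sub, Finset.mul_sum, Matrix.sub_mulVec, Matrix.sum_mulVec, dotProduct_sub,
    dotProduct_sum]
  simp [Matrix.mul_smul, Matrix.smul_mulVec]

/-- main equivalence: under the assumption that every CLF-matrix Q
makes the SDP feasibility problem infeasible, a quadratic CLF exists if and only
if a constant stabilizing controller exists. -/
theorem stmt_18 {N m : ℕ} (A : Matrix (Fin N) (Fin N) ℝ)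
    (B : Fin m → Matrix (Fin N) (Fin N) ℝ)
    (hassump : ∀ Q : Matrix (Fin N) (Fin N) ℝ, Q.PosDef →
      (∀ z : Fin N → ℝ, z ≠ 0 → ∃ u : Fin m → ℝ,
        z ⬝ᵥ ((Q * A) *ᵥ z) + ∑ i, (z ⬝ᵥ ((Q * B i) *ᵥ z)) * u i < 0) →
      ¬∃ Z : Matrix (Fin N) (Fin N) ℝ, Z.PosSemidef ∧ Z ≠ 0 ∧
        0 ≤ Matrix.trace (((1 / 2 : ℝ) • (Q * A + (Q * A)ᵀ)) * Z) ∧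
        ∀ i, Matrix.trace (((1 / 2 : ℝ) • (Q * B i + (Q * B i)ᵀ)) * Z) = 0) :
    (∃ Q : Matrix (Fin N) (Fin N) ℝ, Q.PosDef ∧
        ∀ z : Fin N → ℝ, z ≠ 0 → ∃ u : Fin m → ℝ,
          z ⬝ᵥ ((Q * A) *ᵥ z) + ∑ i, (z ⬝ᵥ ((Q * B i) *ᵥ z)) * u i < 0) ↔
      (∃ c : Fin m → ℝ, IsHurwitz (A - ∑ i, c i • B i)) := by
  constructor
  · rintro ⟨Q, hQ, hclf⟩
    obtain ⟨c, hc⟩ := aux_farkas (Q * A) (fun i => Q * B i) (hassump Q hQ hclf)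
    refine ⟨c, aux_hurwitz _ Q hQ fun z hz => ?_⟩
    rw [aux_expand]
    exact hc z hz
  · rintro ⟨c, hc⟩
    obtain ⟨Q, hQ, h⟩ := aux_lyap _ hc
    refine ⟨Q, hQ, fun z hz => ⟨fun i => -c i, ?_⟩⟩
    have := h z hz
    rw [aux_expand] at this
    simp only [mul_neg, Finset.sum_neg_distrib]
    simp only [mul_comm (c _)] at this
    linarith
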